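/- Let τ ∈ iℝ_{>0}, so 0 < q = exp(2πiτ) < 1. Let λ ∈ ℝ, α, β ∈ 2ℤ_{>0} and ρ, σ ∈ ℝ_{≥3}, and let (a,b,c,d) = (1+ρ+σ, 1−ρ+σ, 1+α+ρ−β−σ, 1−α−ρ−β−σ). Define Δ(x) = [ Γ_{2τ}(−1+1/(2τ)+a−x)·Γ_{2τ}(−1+1/(2τ)+b−x) ] / [ Γ_{2τ}(1+1/(2τ)−c−x)·Γ_{2τ}(1+1/(2τ)−d−x) ] and F_λ(x) = Δ(x)^{-1}·φ_λ(x), where φ_λ is the matrix-coefficient integral of Theorem 'main1'. Then for every x ∈ iℝ with q^{2x} ∉ {1, q^{2}, q^{−2}} at which Δ(x), Δ(x+2) and Δ(x−2) are defined and nonzero (which holds for generic ρ and σ), F_λ satisfies the Askey–Wilson second order difference equation A(x)·(F_λ(x+2) − F_λ(x)) + A(−x)·(F_λ(x−2) − F_λ(x)) = E(λ;β)·F_λ(x). -/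

import Mathlib

noncomputable section

open Complex MeasureTheory

/-- `q^u = exp(2πiτu)`. -/
def qpow (τ u : ℂ) : ℂ := Complex.exp (2 * (Real.pi : ℂ) * Complex.I * τ * u)

/-- The q-gamma type function `Γ_τ(x) = q^{−x²/16} / (−q^{(x+1)/2}; q)_∞`. -/
def qGamma (τ x : ℂ) : ℂ :=
  qpow τ (-(x ^ 2) / 16) / ∏' n : ℕ, (1 + qpow τ ((x + 1) / 2 + (n : ℂ)))

/-- The Askey-Wilson coefficient `A(x)`. -/
def awA (τ a b c d x : ℂ) : ℂ :=
  ((1 - qpow τ (a + x)) * (1 - qpow τ (b + x)) * (1 - qpow τ (c + x)) * (1 - qpow τ (d + x))) /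
    ((1 - qpow τ (2 * x)) * (1 - qpow τ (2 + 2 * x)))

/-- The eigenvalue `E(λ;β)`. -/
def eigenE (τ lam β : ℂ) : ℂ :=
  -1 - qpow τ (2 - 2 * β) +
    qpow τ (1 - β) * (qpow τ (2 * Complex.I * lam) + qpow τ (-(2 * Complex.I * lam)))

/-- The matrix coefficient `φ_λ(x)`. -/
def phiMat (τ lam α ρ β σ x : ℂ) : ℂ :=
  ∫ y in (0 : ℝ)..1,
    (qGamma (2 * τ) (-(2 * τ)⁻¹ + β + σ - Complex.I * lam + x + (y : ℂ) / τ) *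
          qGamma (2 * τ) (-1 - (2 * τ)⁻¹ + σ - Complex.I * lam - x - (y : ℂ) / τ) /
        (qGamma (2 * τ) (-(2 * τ)⁻¹ + β + σ + Complex.I * lam - x - (y : ℂ) / τ) *
          qGamma (2 * τ) (1 - (2 * τ)⁻¹ + σ + Complex.I * lam + x + (y : ℂ) / τ))) *
      (qGamma (2 * τ) (-1 + (2 * τ)⁻¹ + α + ρ + Complex.I * lam - (y : ℂ) / τ) *
          qGamma (2 * τ) ((2 * τ)⁻¹ + ρ + Complex.I * lam + (y : ℂ) / τ) /
        (qGamma (2 * τ) (1 + (2 * τ)⁻¹ + α + ρ - Complex.I * lam + (y : ℂ) / τ) *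
          qGamma (2 * τ) ((2 * τ)⁻¹ + ρ - Complex.I * lam - (y : ℂ) / τ)))

/-- The gauge factor
`Δ(x) = Γ_{2τ}(−1+1/(2τ)+a−x)·Γ_{2τ}(−1+1/(2τ)+b−x) /
  (Γ_{2τ}(1+1/(2τ)−c−x)·Γ_{2τ}(1+1/(2τ)−d−x))`. -/
def gaugeDelta (τ a b c d x : ℂ) : ℂ :=
  (qGamma (2 * τ) (-1 + (2 * τ)⁻¹ + a - x) * qGamma (2 * τ) (-1 + (2 * τ)⁻¹ + b - x)) /
    (qGamma (2 * τ) (1 + (2 * τ)⁻¹ - c - x) * qGamma (2 * τ) (1 + (2 * τ)⁻¹ - d - x))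

/-- The pole set of `Γ_{2τ}`. -/
def qGamma2Poles (τ : ℂ) : Set ℂ :=
  {u : ℂ | ∃ k l : ℤ, k ≤ 0 ∧
    u = -1 + (2 * τ)⁻¹ + 2 * (k : ℂ) + 2 * (2 * τ)⁻¹ * (l : ℂ)}

/-- `Δ(x)` is defined at `x`, i.e. the arguments of the four q-gamma factors
avoid the poles of `Γ_{2τ}`. -/
def gaugeDeltaDefined (τ a b c d x : ℂ) : Prop :=
  (-1 + (2 * τ)⁻¹ + a - x) ∉ qGamma2Poles τ ∧
  (-1 + (2 * τ)⁻¹ + b - x) ∉ qGamma2Poles τ ∧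
  (1 + (2 * τ)⁻¹ - c - x) ∉ qGamma2Poles τ ∧
  (1 + (2 * τ)⁻¹ - d - x) ∉ qGamma2Poles τ

/-!
The functional equation `Γ_τ(u+1) = (q^{u/4} + q^{-u/4}) Γ_τ(u-1)` shows that moving `x` or the
integration variable `s = y/τ` by `2` multiplies the integrand of `φ_λ(x)` by a ratio of products of
factors `q^u + q^{-u} - (q^v + q^{-v})`. Creative telescoping then applies: a three-term difference
operator in `x` maps the integrand to `G(s+2) - G(s)` with an explicit `G`. Because `α` and `β` are
even integers, `G` has period `1/τ`, and `G` is holomorphic between the two contours, so the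
integral of `G(s+2) - G(s)` over a period vanishes by Cauchy's theorem. Each coefficient of
`φ_λ(x±2)` in the resulting difference equation is half of the numerator of `A(±x)` times a second
half in which `x` is shifted; conjugation by `Δ` exchanges the latter for the missing half.
-/

/-- `q^u + q^{-u}`, that is `2 cosh (2πiτu)`. -/
def qcosh (τ u : ℂ) : ℂ := qpow τ u + qpow τ (-u)

/-- `q^u - q^{-u}`, that is `2 sinh (2πiτu)`. -/
def qsinh (τ u : ℂ) : ℂ := qpow τ u - qpow τ (-u)

section QPow

lemma qpow_ne_zero (τ u : ℂ) : qpow τ u ≠ 0 := Complex.exp_ne_zero _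

lemma qpow_add (τ u v : ℂ) : qpow τ (u + v) = qpow τ u * qpow τ v := by
  rw [qpow, mul_add, Complex.exp_add, qpow, qpow]

lemma qpow_neg (τ u : ℂ) : qpow τ (-u) = (qpow τ u)⁻¹ := by
  rw [qpow, mul_neg, Complex.exp_neg, qpow]

lemma qpow_sub (τ u v : ℂ) : qpow τ (u - v) = qpow τ u / qpow τ v := by
  rw [sub_eq_add_neg, qpow_add, qpow_neg, div_eq_mul_inv]

lemma qpow_two_mul (τ u : ℂ) : qpow τ (2 * u) = qpow τ u ^ 2 := by
  rw [two_mul, qpow_add, sq]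

lemma qpow_two_mul_left (τ u : ℂ) : qpow (2 * τ) u = qpow τ (2 * u) := by
  rw [qpow, qpow]; ring_nf

lemma qpow_two_eq (τ : ℂ) : qpow τ 2 = qpow τ 1 ^ 2 := by
  simpa using qpow_two_mul τ 1

lemma norm_qpow (τ u : ℂ) : ‖qpow τ u‖ = Real.exp (-(2 * Real.pi * (τ * u).im)) := by
  rw [qpow, Complex.norm_exp, mul_assoc,
    show 2 * (Real.pi : ℂ) * I * (τ * u) = ((2 * Real.pi : ℝ) : ℂ) * (τ * u) * I by push_cast; ring,
    Complex.mul_I_re, Complex.im_ofReal_mul]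

lemma norm_qpow_lt_one {τ u : ℂ} (hu : 0 < (τ * u).im) : ‖qpow τ u‖ < 1 := by
  rw [norm_qpow, Real.exp_lt_one_iff]
  have := Real.pi_pos
  nlinarith

lemma differentiable_qpow (τ : ℂ) : Differentiable ℂ (qpow τ) := by
  unfold qpow
  fun_prop

end QPow

section QCosh

lemma qcosh_neg (τ u : ℂ) : qcosh τ (-u) = qcosh τ u := by
  rw [qcosh, qcosh, neg_neg, add_comm]

lemma qsinh_neg (τ u : ℂ) : qsinh τ (-u) = -qsinh τ u := by
  rw [qsinh, qsinh, neg_neg, neg_sub]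

lemma qcosh_mul_qcosh (τ u v : ℂ) :
    qcosh τ u * qcosh τ v = qcosh τ (u + v) + qcosh τ (u - v) := by
  simp only [qcosh, neg_add, neg_sub', qpow_add, qpow_sub, qpow_neg]
  have hu := qpow_ne_zero τ u
  have hv := qpow_ne_zero τ v
  field_simp
  ring

lemma qcosh_two_mul_left (τ u : ℂ) : qcosh (2 * τ) u = qcosh τ (2 * u) := by
  simp only [qcosh, qpow_two_mul_left, mul_neg]

lemma differentiable_qcosh (τ : ℂ) : Differentiable ℂ (qcosh τ) :=
  (differentiable_qpow τ).add ((differentiable_qpow τ).comp differentiable_neg)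

lemma one_sub_qpow (τ u : ℂ) : 1 - qpow τ (2 * u) = -(qpow τ u * qsinh τ u) := by
  have hu := qpow_ne_zero τ u
  rw [qsinh, qpow_neg, qpow_two_mul]
  field_simp
  ring

lemma one_sub_qpow_add_mul_one_sub_qpow_sub (τ u v : ℂ) :
    (1 - qpow τ (u + v)) * (1 - qpow τ (u - v)) = qpow τ u * (qcosh τ u - qcosh τ v) := by
  have hu := qpow_ne_zero τ u
  have hv := qpow_ne_zero τ v
  simp only [qcosh, qpow_add, qpow_sub, qpow_neg]
  field_simp
  ring

end QCosh

section HalfPeriod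

variable {τ h u v w : ℂ}

lemma qpow_inv_self (hτ : τ ≠ 0) : qpow τ τ⁻¹ = 1 := by
  rw [qpow, mul_assoc, mul_inv_cancel₀ hτ, mul_one, Complex.exp_two_pi_mul_I]

lemma qpow_inv_two_mul_self (hτ : τ ≠ 0) : qpow τ (2 * τ)⁻¹ = -1 := by
  rw [qpow, ← Complex.exp_pi_mul_I]
  congr 1
  field_simp

lemma qpow_neg_inv_two_mul_self (hτ : τ ≠ 0) : qpow τ (-(2 * τ)⁻¹) = -1 := by
  rw [qpow_neg, qpow_inv_two_mul_self hτ, inv_neg_one]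

lemma qcosh_add_of_qpow_eq_neg_one (hh : qpow τ h = -1) (u : ℂ) :
    qcosh τ (h + u) = -qcosh τ u := by
  simp only [qcosh, neg_add, qpow_add, qpow_neg, hh]
  ring

lemma im_mul_eq_zero_of_qpow_eq_neg_one (hh : qpow τ h = -1) : (τ * h).im = 0 := by
  have hnorm := norm_qpow τ h
  rw [hh, norm_neg, norm_one, eq_comm, Real.exp_eq_one_iff, neg_eq_zero] at hnorm
  exact (mul_eq_zero.mp hnorm).resolve_left (by positivity)

lemma im_two_mul_pos_of_qpow_eq_neg_one (hh : qpow τ h = -1) (hu : 0 < (τ * u).im)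
    (hw : w = h + u) : 0 < (2 * τ * w).im := by
  have him : (2 * τ * w).im = 2 * (τ * u).im := by
    rw [hw, mul_assoc, mul_add, ← ofReal_ofNat, Complex.im_ofReal_mul, Complex.add_im,
      im_mul_eq_zero_of_qpow_eq_neg_one hh, zero_add]
  rw [him]
  positivity

lemma im_two_mul_pos (hτ : 0 < τ.im) : 0 < (2 * τ).im := by
  simpa using hτ

lemma im_mul_two_nonneg (hτ : 0 < τ.im) : 0 ≤ (τ * 2).im := by
  rw [mul_comm]
  exact (im_two_mul_pos hτ).le

lemma ne_zero_of_im_pos (hτ : 0 < τ.im) : τ ≠ 0 := by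
  rintro rfl
  simp at hτ

lemma im_mul_pos_of_eq_add (hu : 0 < (τ * u).im) (hv : 0 ≤ (τ * v).im)
    (hw : w = u + v) : 0 < (τ * w).im := by
  rw [hw, mul_add, add_im]
  positivity

end HalfPeriod

section Certificate

/-- The polynomial in Fricke's trace identity for the commutator. It splits at arguments of the form
`q^u + q^{-u}`, which is how the Askey-Wilson coefficients arise from the coefficients of
`φ_λ(x ± 2)`. -/
def frickeForm (a b c : ℂ) : ℂ := a ^ 2 + b ^ 2 + c ^ 2 - a * b * c - 4

lemma frickeForm_qcosh (τ u v b : ℂ) :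
    frickeForm (qcosh τ u) b (qcosh τ v) =
      (qcosh τ (v + u) - b) * (qcosh τ (v - u) - b) := by
  have hu := qpow_ne_zero τ u
  have hv := qpow_ne_zero τ v
  simp only [frickeForm, qcosh, neg_add, neg_sub', qpow_add, qpow_sub, qpow_neg]
  field_simp
  ring

/-- The trigonometric polynomial factor of the telescoping certificate `phiPrimitive`. With
`cofactor` it solves the linear equations `frickeForm_mul_eq_certificate_add_cofactor` and
`frickeForm_mul_eq_cofactor_sub_certificate`, where `κ`, `μ`, `ν`, `ξ` stand for `qcosh` of `σ`,
`β + σ`, `ρ`, `α + ρ` and `l` for `iλ`. -/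
def certificate (τ l x κ μ ν ξ t : ℂ) : ℂ :=
  qsinh τ (x - 1) * (κ * qcosh τ (t + x + 1 - l) - ν * (qcosh τ (t - l) - μ)) -
    qsinh τ (x + 1) * (μ * qcosh τ (t + x + l) - ξ * (qcosh τ (t + 1 + l) - κ)) +
    qsinh τ 2 * κ * μ + qsinh τ (x - 1) * qsinh τ (x + 1) * qsinh τ (1 + 2 * l)

/-- The multiple of `phiIntegrand` by which the `x + 2` term of the difference operator misses
`phiPrimitive`; it cancels against the `x - 2` term. Parameters are as in `certificate`. -/
def cofactor (τ l x κ μ ν ξ t : ℂ) : ℂ :=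
  qsinh τ (x + 1) * (μ * qcosh τ (t - 1 + l) - ξ * (qcosh τ (t - x + l) - ν)) -
    qsinh τ (x - 1) * (κ * (qcosh τ (t - l) - μ) - ν * qcosh τ (t - x - 1 - l)) -
    qsinh τ (2 * x) * ν * μ + qsinh τ (x - 1) * qsinh τ (x + 1) * qsinh τ (x - 2 * l)

/-- The coefficient of `φ_λ(x)` in the difference equation of `phiMat`. Parameters are as in
`certificate`. -/
def centralCoeff (τ l x κ μ ν ξ : ℂ) : ℂ :=
  qsinh τ x * (qsinh τ (x - 1) * qsinh τ (x + 1) * qcosh τ (2 * l) -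
    qcosh τ x * (ν * μ + κ * ξ) + qcosh τ 1 * (κ * μ + ν * ξ))

lemma frickeForm_mul_eq_certificate_add_cofactor (τ l x κ μ ν ξ t : ℂ) :
    qsinh τ (x - 1) * frickeForm κ ν (qcosh τ (x + 1)) * (qcosh τ (t - l) - μ) =
      certificate τ l x κ μ ν ξ t * (qcosh τ (t - x + l) - ν) +
        cofactor τ l x κ μ ν ξ t * (qcosh τ (t + 1 + l) - κ) := by
  have hq := qpow_ne_zero τ 1
  have hx := qpow_ne_zero τ x
  have hl := qpow_ne_zero τ l
  have ht := qpow_ne_zero τ t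
  simp only [frickeForm, certificate, cofactor, qcosh, qsinh, neg_add, neg_sub', qpow_add, qpow_sub,
    qpow_neg, qpow_two_mul, qpow_two_eq]
  field_simp
  ring

lemma frickeForm_mul_eq_cofactor_sub_certificate (τ l x κ μ ν ξ t : ℂ) :
    qsinh τ (x + 1) * frickeForm μ ξ (qcosh τ (x - 1)) * (qcosh τ (t + 1 + l) - κ) =
      (centralCoeff τ l x κ μ ν ξ - cofactor τ l x κ μ ν ξ (t + 2)) * (qcosh τ (t - l) - μ) -
        certificate τ l x κ μ ν ξ t * (qcosh τ (t - x + 1 - l) - ξ) := by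
  have hq := qpow_ne_zero τ 1
  have hx := qpow_ne_zero τ x
  have hl := qpow_ne_zero τ l
  have ht := qpow_ne_zero τ t
  simp only [frickeForm, certificate, cofactor, centralCoeff, qcosh, qsinh, neg_add, neg_sub',
    qpow_add, qpow_sub, qpow_neg, qpow_two_mul, qpow_two_eq]
  field_simp
  ring

lemma sum_coeff_eq_centralCoeff (τ l x β σ ν ξ : ℂ) :
    qsinh τ (x - 1) * ((qcosh τ (x + 1 + σ) - ν) * (qcosh τ (x + 1 - β - σ) - ξ)) +
        qsinh τ (x + 1) * ((qcosh τ (x - 1 - σ) - ν) * (qcosh τ (x - 1 + β + σ) - ξ)) +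
        qsinh τ (x - 1) * qsinh τ (x + 1) * qsinh τ x * (qcosh τ (2 * l) - qcosh τ (1 - β)) =
      centralCoeff τ l x (qcosh τ σ) (qcosh τ (β + σ)) ν ξ := by
  have hq := qpow_ne_zero τ 1
  have hx := qpow_ne_zero τ x
  have hl := qpow_ne_zero τ l
  have hβ := qpow_ne_zero τ β
  have hσ := qpow_ne_zero τ σ
  simp only [centralCoeff, qcosh, qsinh, neg_add, neg_sub', qpow_add, qpow_sub,
    qpow_neg, qpow_two_mul]
  field_simp
  ring

end Certificate

/-- The infinite product `(-q^u; q)_∞`, the denominator of `Γ_τ(2u - 1)`. -/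
def negQPochhammer (τ u : ℂ) : ℂ := ∏' n : ℕ, (1 + qpow τ (u + n))

section QPochhammer

variable {τ : ℂ}

lemma qpow_add_natCast (τ u : ℂ) (n : ℕ) : qpow τ (u + n) = qpow τ u * qpow τ 1 ^ n := by
  rw [qpow_add, qpow, qpow, qpow, ← Complex.exp_nat_mul]
  ring_nf

lemma norm_qpow_one_lt_one (hτ : 0 < τ.im) : ‖qpow τ 1‖ < 1 :=
  norm_qpow_lt_one (by rwa [mul_one])

lemma summable_norm_qpow_add_natCast (hτ : 0 < τ.im) (u : ℂ) :
    Summable fun n : ℕ => ‖qpow τ (u + n)‖ := by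
  simp only [qpow_add_natCast, norm_mul, norm_pow]
  exact (summable_geometric_of_lt_one (norm_nonneg _) (norm_qpow_one_lt_one hτ)).mul_left _

lemma negQPochhammer_eq_mul (hτ : 0 < τ.im) (u : ℂ) :
    negQPochhammer τ u = (1 + qpow τ u) * negQPochhammer τ (u + 1) := by
  have hshift (n : ℕ) : u + (n + 1 : ℕ) = u + 1 + n := by push_cast; ring
  have hmul : Multipliable fun n : ℕ => 1 + qpow τ (u + (n + 1 : ℕ)) := by
    simp only [hshift]
    exact multipliable_one_add_of_summable (summable_norm_qpow_add_natCast hτ (u + 1))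
  have hsplit := tprod_eq_zero_mul' (f := fun n : ℕ => 1 + qpow τ (u + n)) hmul
  simp only [hshift, Nat.cast_zero, add_zero] at hsplit
  exact hsplit

lemma negQPochhammer_ne_zero (hτ : 0 < τ.im) {u : ℂ} (hu : 0 < (τ * u).im) :
    negQPochhammer τ u ≠ 0 := by
  refine tprod_one_add_ne_zero_of_summable (fun n hn => ?_)
    (summable_norm_qpow_add_natCast hτ u)
  have hlt : ‖qpow τ (u + n)‖ < 1 := by
    refine norm_qpow_lt_one ?_
    have hn : (τ * (u + n)).im = (τ * u).im + τ.im * n := by simp [mul_add]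
    rw [hn]
    positivity
  rw [eq_neg_of_add_eq_zero_right hn, norm_neg, norm_one] at hlt
  exact hlt.false

lemma differentiable_negQPochhammer (hτ : 0 < τ.im) : Differentiable ℂ (negQPochhammer τ) := by
  intro u
  have hcont : Continuous fun w => ‖qpow τ w‖ := (differentiable_qpow τ).continuous.norm
  have hopen : IsOpen {w | ‖qpow τ w‖ < ‖qpow τ u‖ + 1} := isOpen_lt hcont continuous_const
  have hdiff (n : ℕ) : Differentiable ℂ fun w : ℂ => qpow τ (w + n) :=
    (differentiable_qpow τ).comp (differentiable_id.add_const _)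
  have hprod : MultipliableLocallyUniformlyOn (fun (n : ℕ) w => 1 + qpow τ (w + n))
      {w | ‖qpow τ w‖ < ‖qpow τ u‖ + 1} := by
    refine Summable.multipliableLocallyUniformlyOn_nat_one_add hopen
      ((summable_geometric_of_lt_one (norm_nonneg _) (norm_qpow_one_lt_one hτ)).mul_left
        (‖qpow τ u‖ + 1)) (.of_forall fun n w hw => ?_)
      fun n => (hdiff n).continuous.continuousOn
    rw [qpow_add_natCast, norm_mul, norm_pow]
    gcongr
    exact hw.le
  refine (hprod.hasProdLocallyUniformlyOn.tendstoLocallyUniformlyOn_finsetRange.differentiableOn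
    (.of_forall fun N => ?_) hopen).differentiableAt (hopen.mem_nhds (lt_add_one ‖qpow τ u‖))
  exact (Differentiable.fun_finsetProd fun n _ => (hdiff n).const_add 1).differentiableOn

end QPochhammer

section QGamma

variable {τ : ℂ}

lemma qGamma_eq_div (τ u : ℂ) :
    qGamma τ u = qpow τ (-(u ^ 2) / 16) / negQPochhammer τ ((u + 1) / 2) := rfl

lemma inv_qGamma_sub_one (hτ : 0 < τ.im) (u : ℂ) :
    (qGamma τ (u - 1))⁻¹ = qcosh τ (u / 4) * (qGamma τ (u + 1))⁻¹ := by
  have hsub : -((u - 1) ^ 2) / 16 = -((u + 1) ^ 2) / 16 + u / 4 := by ring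
  have hhalf : u / 2 = u / 4 + u / 4 := by ring
  have hquarter := qpow_ne_zero τ (u / 4)
  rw [qGamma_eq_div, qGamma_eq_div, inv_div, inv_div, hsub, qpow_add,
    show (u - 1 + 1) / 2 = u / 2 by ring, show (u + 1 + 1) / 2 = u / 2 + 1 by ring,
    negQPochhammer_eq_mul hτ (u / 2), hhalf, qpow_add, qcosh, qpow_neg]
  field_simp
  ring

lemma qGamma_ne_zero (hτ : 0 < τ.im) {u : ℂ} (hu : 0 < (τ * (u + 1)).im) : qGamma τ u ≠ 0 := by
  refine div_ne_zero (qpow_ne_zero _ _) (negQPochhammer_ne_zero hτ ?_)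
  rw [mul_div_assoc', Complex.div_ofNat_im]
  positivity

lemma qGamma_add_one (hτ : 0 < τ.im) {u : ℂ} (hu : qGamma τ (u - 1) ≠ 0) :
    qGamma τ (u + 1) = qcosh τ (u / 4) * qGamma τ (u - 1) := by
  have hrec := inv_qGamma_sub_one hτ u
  have hadd : qGamma τ (u + 1) ≠ 0 := by
    rw [← inv_inv (qGamma τ (u + 1))]
    exact inv_ne_zero (right_ne_zero_of_mul (hrec ▸ inv_ne_zero hu))
  field_simp at hrec
  rw [hrec, mul_comm]

lemma differentiable_inv_qGamma (hτ : 0 < τ.im) : Differentiable ℂ fun u => (qGamma τ u)⁻¹ := by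
  simp only [qGamma_eq_div, inv_div]
  refine Differentiable.fun_div ((differentiable_negQPochhammer hτ).comp (by fun_prop))
    ((differentiable_qpow τ).comp (by fun_prop)) fun _ => qpow_ne_zero _ _

lemma differentiableAt_qGamma (hτ : 0 < τ.im) {u : ℂ} (hu : 0 < (τ * (u + 1)).im) :
    DifferentiableAt ℂ (qGamma τ) u := by
  have h := (differentiable_inv_qGamma hτ u).fun_inv (inv_ne_zero (qGamma_ne_zero hτ hu))
  simpa only [inv_inv] using h

lemma qGamma_add_two_div (hτ : τ ≠ 0) (u : ℂ) :
    qGamma τ (u + 2 / τ) = Complex.exp (-(Real.pi * I * (u + 1 / τ) / 2)) * qGamma τ u := by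
  have hperiod (n : ℕ) :
      qpow τ ((u + 2 / τ + 1) / 2 + n) = qpow τ ((u + 1) / 2 + n) := by
    rw [show (u + 2 / τ + 1) / 2 + (n : ℂ) = (u + 1) / 2 + n + τ⁻¹ by ring, qpow_add,
      qpow_inv_self hτ, mul_one]
  have hgauss : qpow τ (-((u + 2 / τ) ^ 2) / 16) =
      Complex.exp (-(Real.pi * I * (u + 1 / τ) / 2)) * qpow τ (-(u ^ 2) / 16) := by
    rw [qpow, qpow, ← Complex.exp_add]
    congr 1
    field_simp
    ring
  simp only [qGamma, hperiod, hgauss, mul_div_assoc]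

end QGamma

/-- The shape of both factors of the integrand of `phiMat`. Pairing `a + u` with `c - u` and `b - u`
with `d + u` turns the recursion of `Γ_τ` into factors `q^v + q^{-v} - (q^w + q^{-w})`. -/
def gammaRatio (τ a b c d u : ℂ) : ℂ :=
  qGamma τ (a + u) * qGamma τ (b - u) / (qGamma τ (c - u) * qGamma τ (d + u))

section GammaRatio

variable {τ a b c d u : ℂ}

lemma gammaRatio_eq_mul_inv (τ a b c d u : ℂ) :
    gammaRatio τ a b c d u = qGamma τ (a + u) * qGamma τ (b - u) *
      ((qGamma τ (c - u))⁻¹ * (qGamma τ (d + u))⁻¹) := by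
  rw [gammaRatio, div_eq_mul_inv, mul_inv]

lemma gammaRatio_neg (τ a b c d u : ℂ) :
    gammaRatio τ a b c d (-u) = gammaRatio τ b a d c u := by
  simp only [gammaRatio, sub_neg_eq_add, ← sub_eq_add_neg, mul_comm]

lemma gammaRatio_add (τ a b c d u v : ℂ) :
    gammaRatio τ a b c d (u + v) = gammaRatio τ (a + v) (b - v) (c - v) (d + v) u := by
  simp only [gammaRatio, add_assoc, add_comm v, sub_sub]

lemma gammaRatio_eq_mul_left (hτ : 0 < τ.im) (hau : 0 < (τ * (a + u - 1)).im) :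
    gammaRatio τ a b c d u =
      (qcosh τ ((a + c) / 4) + qcosh τ ((a - c) / 4 + (u - 1) / 2)) *
        gammaRatio τ (a - 2) b (c + 2) d u := by
  have hprod : qcosh τ ((a + c) / 4) + qcosh τ ((a - c) / 4 + (u - 1) / 2) =
      qcosh τ ((a + u - 1) / 4) * qcosh τ ((c - u + 1) / 4) := by
    rw [qcosh_mul_qcosh]
    ring_nf
  have hnum := qGamma_add_one hτ (qGamma_ne_zero hτ (by rwa [sub_add_cancel]))
  have hden := inv_qGamma_sub_one hτ (c - u + 1)
  rw [sub_add_cancel] at hnum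
  rw [add_sub_cancel_right] at hden
  rw [hprod, gammaRatio_eq_mul_inv, gammaRatio_eq_mul_inv, hnum, hden,
    show a - 2 + u = a + u - 1 - 1 by ring, show c + 2 - u = c - u + 1 + 1 by ring]
  ring

lemma gammaRatio_eq_mul_right (hτ : 0 < τ.im) (hbu : 0 < (τ * (b - u - 1)).im) :
    gammaRatio τ a b c d u =
      (qcosh τ ((b + d) / 4) + qcosh τ ((b - d) / 4 - (u + 1) / 2)) *
        gammaRatio τ a (b - 2) c (d + 2) u := by
  rw [← gammaRatio_neg, ← gammaRatio_neg τ (b - 2), gammaRatio_eq_mul_left hτ hbu]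
  ring_nf

lemma differentiableAt_gammaRatio (hτ : 0 < τ.im) (ha : 0 < (τ * (a + u + 1)).im)
    (hb : 0 < (τ * (b - u + 1)).im) : DifferentiableAt ℂ (gammaRatio τ a b c d) u := by
  rw [funext (gammaRatio_eq_mul_inv τ a b c d)]
  have hinv := differentiable_inv_qGamma hτ
  exact ((DifferentiableAt.comp u (differentiableAt_qGamma hτ ha) (by fun_prop)).mul
    (DifferentiableAt.comp u (differentiableAt_qGamma hτ hb) (by fun_prop))).mul
      ((hinv.comp (by fun_prop)).mul (hinv.comp (by fun_prop))).differentiableAt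

lemma gammaRatio_periodic (hτ : τ ≠ 0) {k : ℤ} (hk : b + d - a - c = 4 * k) :
    Function.Periodic (gammaRatio τ a b c d) (2 / τ) := by
  intro u
  have hneg (w : ℂ) : qGamma τ w =
      Complex.exp (-(Real.pi * I * (w - 1 / τ) / 2)) * qGamma τ (w - 2 / τ) := by
    have h := qGamma_add_two_div hτ (w - 2 / τ)
    rwa [sub_add_cancel, show w - 2 / τ + 1 / τ = w - 1 / τ by ring] at h
  have hexp :
      Complex.exp (-(Real.pi * I * (a + u + 1 / τ) / 2)) /
          Complex.exp (-(Real.pi * I * (d + u + 1 / τ) / 2)) =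
        Complex.exp (-(Real.pi * I * (b - u - 1 / τ) / 2)) /
          Complex.exp (-(Real.pi * I * (c - u - 1 / τ) / 2)) := by
    rw [← Complex.exp_sub, ← Complex.exp_sub, Complex.exp_eq_exp_iff_exists_int]
    exact ⟨k, by linear_combination (Real.pi * I) / 2 * hk⟩
  rw [gammaRatio, gammaRatio, ← add_assoc, ← add_assoc, ← sub_sub, ← sub_sub,
    qGamma_add_two_div hτ (a + u), qGamma_add_two_div hτ (d + u), hneg (b - u), hneg (c - u)]
  linear_combination (qGamma τ (a + u) * qGamma τ (b - u - 2 / τ) /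
    (qGamma τ (c - u - 2 / τ) * qGamma τ (d + u))) * hexp

end GammaRatio

/-- The common form of the two factors of the integrand of `phiMat`, which have `h = -(2τ)⁻¹`,
`l = -iλ` and `h = (2τ)⁻¹`, `l = iλ`. Only `q^h = -1` matters in the recurrences. -/
def kernel (τ h l p r : ℂ) : ℂ → ℂ :=
  gammaRatio (2 * τ) (h + p + l) (-1 + h + r + l) (h + p - l) (1 + h + r - l)

/-- The kernel contiguous to `kernel` that is a common right factor of `kernel τ h l p r u` and
`kernel τ h l p r (u - 2)`. -/
def lowerKernel (τ h l p r : ℂ) : ℂ → ℂ :=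
  gammaRatio (2 * τ) (h + p + l - 2) (-1 + h + r + l) (h + p - l + 2) (1 + h + r - l)

/-- The kernel contiguous to `kernel` that is a common multiple of `kernel τ h l p r u` and
`kernel τ h l p r (u - 2)`. -/
def upperKernel (τ h l p r : ℂ) : ℂ → ℂ :=
  gammaRatio (2 * τ) (h + p + l) (-1 + h + r + l + 2) (h + p - l) (1 + h + r - l - 2)

section Kernel

variable {τ h l p r u : ℂ}

lemma kernel_eq_mul_lowerKernel (hτ : 0 < τ.im) (hh : qpow τ h = -1)
    (hu : 0 < (τ * (p + l + u - 1)).im) :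
    kernel τ h l p r u = (qcosh τ (u - 1 + l) - qcosh τ p) * lowerKernel τ h l p r u := by
  rw [kernel, gammaRatio_eq_mul_left (im_two_mul_pos hτ)
    (im_two_mul_pos_of_qpow_eq_neg_one hh hu (by ring)), qcosh_two_mul_left, qcosh_two_mul_left,
    show 2 * ((h + p + l + (h + p - l)) / 4) = h + p by ring, qcosh_add_of_qpow_eq_neg_one hh,
    neg_add_eq_sub, lowerKernel]
  ring_nf

lemma upperKernel_eq_mul_kernel (hτ : 0 < τ.im) (hh : qpow τ h = -1)
    (hu : 0 < (τ * (r + l - u)).im) :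
    upperKernel τ h l p r u = (qcosh τ (u - l) - qcosh τ r) * kernel τ h l p r u := by
  rw [upperKernel, gammaRatio_eq_mul_right (im_two_mul_pos hτ)
    (im_two_mul_pos_of_qpow_eq_neg_one hh hu (by ring)), qcosh_two_mul_left, qcosh_two_mul_left,
    show 2 * ((-1 + h + r + l + 2 + (1 + h + r - l - 2)) / 4) = h + r by ring,
    qcosh_add_of_qpow_eq_neg_one hh, neg_add_eq_sub, ← qcosh_neg τ (u - l), kernel]
  ring_nf

lemma kernel_sub_two_eq_mul_lowerKernel (hτ : 0 < τ.im) (hh : qpow τ h = -1)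
    (hu : 0 < (τ * (r + l - u)).im) :
    kernel τ h l p r (u - 2) = (qcosh τ (u - l) - qcosh τ r) * lowerKernel τ h l p r u := by
  rw [kernel, sub_eq_add_neg u, gammaRatio_add, gammaRatio_eq_mul_right (im_two_mul_pos hτ)
    (im_two_mul_pos_of_qpow_eq_neg_one hh hu (by ring)), qcosh_two_mul_left, qcosh_two_mul_left,
    show 2 * ((-1 + h + r + l - -2 + (1 + h + r - l + -2)) / 4) = h + r by ring,
    qcosh_add_of_qpow_eq_neg_one hh, neg_add_eq_sub, ← qcosh_neg τ (u - l), lowerKernel]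
  ring_nf

lemma upperKernel_eq_mul_kernel_sub_two (hτ : 0 < τ.im) (hh : qpow τ h = -1)
    (hu : 0 < (τ * (p + l + u - 1)).im) :
    upperKernel τ h l p r u = (qcosh τ (u - 1 + l) - qcosh τ p) * kernel τ h l p r (u - 2) := by
  rw [upperKernel, gammaRatio_eq_mul_left (im_two_mul_pos hτ)
    (im_two_mul_pos_of_qpow_eq_neg_one hh hu (by ring)), qcosh_two_mul_left, qcosh_two_mul_left,
    show 2 * ((h + p + l + (h + p - l)) / 4) = h + p by ring, qcosh_add_of_qpow_eq_neg_one hh,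
    neg_add_eq_sub, kernel, sub_eq_add_neg u 2, gammaRatio_add]
  ring_nf

lemma differentiableAt_kernel (hτ : 0 < τ.im) (hh : qpow τ h = -1)
    (hp : 0 < (τ * (p + l + u + 1)).im) (hr : 0 < (τ * (r + l - u)).im) :
    DifferentiableAt ℂ (kernel τ h l p r) u :=
  differentiableAt_gammaRatio (im_two_mul_pos hτ)
    (im_two_mul_pos_of_qpow_eq_neg_one hh hp (by ring))
    (im_two_mul_pos_of_qpow_eq_neg_one hh hr (by ring))

lemma differentiableAt_lowerKernel (hτ : 0 < τ.im) (hh : qpow τ h = -1)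
    (hp : 0 < (τ * (p + l + u - 1)).im) (hr : 0 < (τ * (r + l - u)).im) :
    DifferentiableAt ℂ (lowerKernel τ h l p r) u :=
  differentiableAt_gammaRatio (im_two_mul_pos hτ)
    (im_two_mul_pos_of_qpow_eq_neg_one hh hp (by ring))
    (im_two_mul_pos_of_qpow_eq_neg_one hh hr (by ring))

lemma differentiableAt_upperKernel (hτ : 0 < τ.im) (hh : qpow τ h = -1)
    (hp : 0 < (τ * (p + l + u + 1)).im) (hr : 0 < (τ * (r + l - u + 2)).im) :
    DifferentiableAt ℂ (upperKernel τ h l p r) u :=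
  differentiableAt_gammaRatio (im_two_mul_pos hτ)
    (im_two_mul_pos_of_qpow_eq_neg_one hh hp (by ring))
    (im_two_mul_pos_of_qpow_eq_neg_one hh hr (by ring))

lemma gammaRatio_two_mul_periodic {a b c d : ℂ} (hτ : τ ≠ 0) {k : ℤ}
    (hk : b + d - a - c = 4 * k) : Function.Periodic (gammaRatio (2 * τ) a b c d) (1 / τ) := by
  have hperiod := gammaRatio_periodic (mul_ne_zero two_ne_zero hτ) hk
  rwa [show 2 / (2 * τ) = 1 / τ by field_simp] at hperiod

lemma lowerKernel_periodic (hτ : τ ≠ 0) {k : ℤ} (hk : r - p = 2 * k) :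
    Function.Periodic (lowerKernel τ h l p r) (1 / τ) :=
  gammaRatio_two_mul_periodic hτ (by linear_combination 2 * hk)

lemma upperKernel_periodic (hτ : τ ≠ 0) {k : ℤ} (hk : r - p = 2 * k) :
    Function.Periodic (upperKernel τ h l p r) (1 / τ) :=
  gammaRatio_two_mul_periodic hτ (by linear_combination 2 * hk)

end Kernel

section ContourShift

lemma integral_add_eq_integral_of_periodic {g : ℂ → ℂ} {c : ℂ} (hc : 0 ≤ c.im)
    (hper : Function.Periodic g 1)
    (hg : ∀ z : ℂ, 0 ≤ z.im → z.im ≤ c.im → DifferentiableAt ℂ g z) :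
    ∫ y in (0 : ℝ)..1, g (y + c) = ∫ y in (0 : ℝ)..1, g y := by
  have hrect := Complex.integral_boundary_rect_eq_zero_of_differentiableOn g 0 (1 + c.im * I)
    fun z hz => by
      have him : z.im ∈ Set.Icc 0 c.im := by simpa [Set.uIcc_of_le hc] using hz.2
      exact (hg z him.1 him.2).differentiableWithinAt
  have hvert (y : ℝ) : g (1 + y * I) = g (y * I) := by rw [add_comm, hper]
  have hhor : Function.Periodic (fun x : ℝ => g (x + c.im * I)) 1 := fun x => by
    beta_reduce
    rw [ofReal_add, ofReal_one, add_right_comm, hper]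
  simp only [zero_re, zero_im, ofReal_zero, zero_mul, add_zero, zero_add, add_re, add_im, one_re,
    one_im, ofReal_one, re_ofReal_mul, im_ofReal_mul, I_re, I_im, mul_zero, mul_one, hvert,
    add_sub_cancel_right] at hrect
  calc ∫ y in (0 : ℝ)..1, g (y + c)
      = ∫ y in (0 : ℝ)..1, g ((y + c.re : ℝ) + c.im * I) := by
        simp only [ofReal_add, add_assoc, re_add_im]
    _ = ∫ y in (c.re)..(c.re + 1), g (y + c.im * I) := by
        rw [intervalIntegral.integral_comp_add_right fun y : ℝ => g (y + c.im * I), zero_add,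
          add_comm]
    _ = ∫ y in (0 : ℝ)..1, g (y + c.im * I) := by
        rw [hhor.intervalIntegral_add_eq c.re 0, zero_add]
    _ = ∫ y in (0 : ℝ)..1, g y := (sub_eq_zero.mp hrect).symm

lemma integral_sub_eq_zero_of_periodic {g : ℂ → ℂ} {c : ℂ} (hc : 0 ≤ c.im)
    (hper : Function.Periodic g 1)
    (hg : ∀ z : ℂ, 0 ≤ z.im → z.im ≤ c.im → DifferentiableAt ℂ g z) :
    ∫ y in (0 : ℝ)..1, (g (y + c) - g y) = 0 := by
  have hint (w : ℂ) (hw₀ : 0 ≤ w.im) (hw : w.im ≤ c.im) :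
      IntervalIntegrable (fun y : ℝ => g (y + w)) volume 0 1 := by
    refine Continuous.intervalIntegrable (continuous_iff_continuousAt.mpr fun y => ?_) 0 1
    exact ContinuousAt.comp (f := fun y : ℝ => (y : ℂ) + w)
      (hg (y + w) (by simpa using hw₀) (by simpa using hw)).continuousAt (by fun_prop)
  have hint₀ := hint 0 le_rfl (by simpa using hc)
  simp only [add_zero] at hint₀
  rw [intervalIntegral.integral_sub (hint c hc le_rfl) hint₀,
    integral_add_eq_integral_of_periodic hc hper hg, sub_self]

end ContourShift

/-- The integrand of `phiMat` in the variable `s = y/τ`, with `l = iλ`. -/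
def phiIntegrand (τ l α ρ β σ x s : ℂ) : ℂ :=
  kernel τ (-(2 * τ)⁻¹) (-l) (β + σ) σ (x + s) * kernel τ (2 * τ)⁻¹ l ρ (α + ρ) s

/-- The function of `s` whose step-`2` difference is the difference operator in `x` applied to
`phiIntegrand`. -/
def phiPrimitive (τ l α ρ β σ x s : ℂ) : ℂ :=
  certificate τ l x (qcosh τ σ) (qcosh τ (β + σ)) (qcosh τ ρ) (qcosh τ (α + ρ)) (x + s - 1) *
    lowerKernel τ (-(2 * τ)⁻¹) (-l) (β + σ) σ (x + s) * upperKernel τ (2 * τ)⁻¹ l ρ (α + ρ) s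

section Telescoping

variable {τ l α ρ β σ x s : ℂ}

lemma phiMat_eq_integral (τ lam α ρ β σ x : ℂ) :
    phiMat τ lam α ρ β σ x = ∫ y in (0 : ℝ)..1, phiIntegrand τ (I * lam) α ρ β σ x (y / τ) := by
  refine intervalIntegral.integral_congr fun y _ => ?_
  simp only [phiIntegrand, kernel, gammaRatio]
  congr 1
  · ring_nf
  · rw [mul_comm (qGamma (2 * τ) ((2 * τ)⁻¹ + ρ + I * lam + y / τ)),
      mul_comm (qGamma (2 * τ) ((2 * τ)⁻¹ + ρ - I * lam - y / τ))]
    ring_nf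

lemma frickeForm_mul_phiIntegrand_add_two (hτ : 0 < τ.im)
    (hβσ : 0 < (τ * (β + σ - l + x + s + 1)).im) (hσ : 0 < (τ * (σ - l - x - s - 2)).im)
    (hρ : 0 < (τ * (ρ + l + s + 1)).im) :
    qsinh τ (x - 1) * frickeForm (qcosh τ σ) (qcosh τ ρ) (qcosh τ (x + 1)) *
        phiIntegrand τ l α ρ β σ (x + 2) s =
      phiPrimitive τ l α ρ β σ x (s + 2) +
        cofactor τ l x (qcosh τ σ) (qcosh τ (β + σ)) (qcosh τ ρ) (qcosh τ (α + ρ)) (x + s + 1) *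
          phiIntegrand τ l α ρ β σ x s := by
  have hτ₀ := ne_zero_of_im_pos hτ
  have hh := qpow_neg_inv_two_mul_self hτ₀
  have hadd := kernel_eq_mul_lowerKernel (r := σ) hτ hh (p := β + σ) (l := -l) (u := x + 2 + s)
    (by convert hβσ using 3; ring)
  have hmid := kernel_sub_two_eq_mul_lowerKernel (p := β + σ) hτ hh (r := σ) (l := -l)
    (u := x + 2 + s) (by convert hσ using 3; ring)
  have hupper := upperKernel_eq_mul_kernel_sub_two (r := α + ρ) hτ (qpow_inv_two_mul_self hτ₀)
    (p := ρ) (l := l) (u := s + 2) (by convert hρ using 3; ring)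
  have hcert := frickeForm_mul_eq_certificate_add_cofactor τ l x (qcosh τ σ) (qcosh τ (β + σ))
    (qcosh τ ρ) (qcosh τ (α + ρ)) (x + s + 1)
  rw [show x + 2 + s - 1 + -l = x + s + 1 - l by ring] at hadd
  rw [show x + 2 + s - 2 = x + s by ring, show x + 2 + s - -l = x + s + 1 + 1 + l by ring] at hmid
  rw [add_sub_cancel_right, show s + 2 - 1 + l = x + s + 1 - x + l by ring] at hupper
  rw [phiIntegrand, phiIntegrand, phiPrimitive, hadd, hmid, hupper,
    show x + (s + 2) - 1 = x + s + 1 by ring, show x + (s + 2) = x + 2 + s by ring]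
  linear_combination lowerKernel τ (-(2 * τ)⁻¹) (-l) (β + σ) σ (x + 2 + s) *
    kernel τ (2 * τ)⁻¹ l ρ (α + ρ) s * hcert

lemma frickeForm_mul_phiIntegrand_sub_two (hτ : 0 < τ.im)
    (hβσ : 0 < (τ * (β + σ - l + x + s - 1)).im) (hσ : 0 < (τ * (σ - l - x - s)).im)
    (hαρ : 0 < (τ * (α + ρ + l - s)).im) :
    qsinh τ (x + 1) * frickeForm (qcosh τ (β + σ)) (qcosh τ (α + ρ)) (qcosh τ (x - 1)) *
        phiIntegrand τ l α ρ β σ (x - 2) s =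
      (centralCoeff τ l x (qcosh τ σ) (qcosh τ (β + σ)) (qcosh τ ρ) (qcosh τ (α + ρ)) -
          cofactor τ l x (qcosh τ σ) (qcosh τ (β + σ)) (qcosh τ ρ) (qcosh τ (α + ρ))
            (x + s + 1)) * phiIntegrand τ l α ρ β σ x s -
        phiPrimitive τ l α ρ β σ x s := by
  have hτ₀ := ne_zero_of_im_pos hτ
  have hh := qpow_neg_inv_two_mul_self hτ₀
  have hsub := kernel_sub_two_eq_mul_lowerKernel (p := β + σ) hτ hh (r := σ) (l := -l)
    (u := x + s) (by convert hσ using 3; ring)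
  have hmid := kernel_eq_mul_lowerKernel (r := σ) hτ hh (p := β + σ) (l := -l) (u := x + s)
    (by convert hβσ using 3; ring)
  have hupper := upperKernel_eq_mul_kernel (p := ρ) hτ (qpow_inv_two_mul_self hτ₀) hαρ
  have hcert := frickeForm_mul_eq_cofactor_sub_certificate τ l x (qcosh τ σ) (qcosh τ (β + σ))
    (qcosh τ ρ) (qcosh τ (α + ρ)) (x + s - 1)
  rw [show x + s - -l = x + s - 1 + 1 + l by ring] at hsub
  rw [← sub_eq_add_neg] at hmid
  rw [show s - l = x + s - 1 - x + 1 - l by ring] at hupper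
  rw [show x + s - 1 + 2 = x + s + 1 by ring] at hcert
  rw [phiIntegrand, phiIntegrand, phiPrimitive, show x - 2 + s = x + s - 2 by ring, hsub, hmid,
    hupper]
  linear_combination lowerKernel τ (-(2 * τ)⁻¹) (-l) (β + σ) σ (x + s) *
    kernel τ (2 * τ)⁻¹ l ρ (α + ρ) s * hcert

lemma phiIntegrand_difference_eq (hτ : 0 < τ.im)
    (hβσ : 0 < (τ * (β + σ - l + x + s - 1)).im) (hσ : 0 < (τ * (σ - l - x - s - 2)).im)
    (hρ : 0 < (τ * (ρ + l + s + 1)).im) (hαρ : 0 < (τ * (α + ρ + l - s)).im) :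
    qsinh τ (x - 1) * frickeForm (qcosh τ σ) (qcosh τ ρ) (qcosh τ (x + 1)) *
          phiIntegrand τ l α ρ β σ (x + 2) s +
        qsinh τ (x + 1) * frickeForm (qcosh τ (β + σ)) (qcosh τ (α + ρ)) (qcosh τ (x - 1)) *
          phiIntegrand τ l α ρ β σ (x - 2) s -
        centralCoeff τ l x (qcosh τ σ) (qcosh τ (β + σ)) (qcosh τ ρ) (qcosh τ (α + ρ)) *
          phiIntegrand τ l α ρ β σ x s =
      phiPrimitive τ l α ρ β σ x (s + 2) - phiPrimitive τ l α ρ β σ x s := by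
  have htwo := im_mul_two_nonneg hτ
  have hadd := frickeForm_mul_phiIntegrand_add_two (α := α) (β := β) hτ
    (im_mul_pos_of_eq_add hβσ htwo (by ring)) hσ hρ
  have hsub := frickeForm_mul_phiIntegrand_sub_two (ρ := ρ) hτ hβσ
    (im_mul_pos_of_eq_add hσ htwo (by ring)) hαρ
  linear_combination hadd + hsub

end Telescoping

section DifferenceEquation

variable {τ l α ρ β σ x : ℂ}

lemma intervalIntegrable_phiIntegrand (hτ : 0 < τ.im)
    (hβσ : 0 < (τ * (β + σ - l + x + 1)).im) (hσ : 0 < (τ * (σ - l - x)).im)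
    (hρ : 0 < (τ * (ρ + l + 1)).im) (hαρ : 0 < (τ * (α + ρ + l)).im) :
    IntervalIntegrable (fun y : ℝ => phiIntegrand τ l α ρ β σ x (y / τ)) volume 0 1 := by
  refine Continuous.intervalIntegrable (continuous_iff_continuousAt.mpr fun y => ?_) 0 1
  have hτ₀ := ne_zero_of_im_pos hτ
  have hy : (τ * (y / τ)).im = 0 := by rw [mul_div_cancel₀ _ hτ₀, ofReal_im]
  have hy' : 0 ≤ (τ * -(y / τ)).im := by rw [mul_neg, neg_im, hy, neg_zero]
  have hleft := differentiableAt_kernel (p := β + σ) (r := σ) (l := -l) (u := x + y / τ) hτ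
    (qpow_neg_inv_two_mul_self hτ₀) (im_mul_pos_of_eq_add hβσ hy.ge (by ring))
    (im_mul_pos_of_eq_add hσ hy' (by ring))
  have hright := differentiableAt_kernel (p := ρ) (r := α + ρ) (l := l) (u := y / τ) hτ
    (qpow_inv_two_mul_self hτ₀) (im_mul_pos_of_eq_add hρ hy.ge (by ring))
    (im_mul_pos_of_eq_add hαρ hy' (by ring))
  exact (ContinuousAt.comp (f := fun y : ℝ => x + y / τ) hleft.continuousAt (by fun_prop)).mul
    (ContinuousAt.comp (f := fun y : ℝ => (y : ℂ) / τ) hright.continuousAt (by fun_prop))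

lemma differentiable_certificate (τ l x κ μ ν ξ : ℂ) :
    Differentiable ℂ (certificate τ l x κ μ ν ξ) := by
  have hcosh (f : ℂ → ℂ) (hf : Differentiable ℂ f) : Differentiable ℂ fun t => qcosh τ (f t) :=
    (differentiable_qcosh τ).comp hf
  unfold certificate
  fun_prop

lemma differentiableAt_phiPrimitive (hτ : 0 < τ.im) {s : ℂ}
    (hβσ : 0 < (τ * (β + σ - l + x + s - 1)).im) (hσ : 0 < (τ * (σ - l - x - s)).im)
    (hρ : 0 < (τ * (ρ + l + s + 1)).im) (hαρ : 0 < (τ * (α + ρ + l - s + 2)).im) :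
    DifferentiableAt ℂ (phiPrimitive τ l α ρ β σ x) s := by
  have hτ₀ := ne_zero_of_im_pos hτ
  have hlower := differentiableAt_lowerKernel (p := β + σ) (r := σ) (l := -l) (u := x + s) hτ
    (qpow_neg_inv_two_mul_self hτ₀) (by convert hβσ using 3; ring) (by convert hσ using 3; ring)
  have hupper := differentiableAt_upperKernel (p := ρ) (r := α + ρ) (l := l) (u := s) hτ
    (qpow_inv_two_mul_self hτ₀) hρ hαρ
  exact (((differentiable_certificate τ l x _ _ _ _).comp
    (by fun_prop : Differentiable ℂ fun s => x + s - 1)).differentiableAt.mul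
      (DifferentiableAt.comp (f := fun s => x + s) s hlower (by fun_prop))).mul hupper

lemma certificate_add_inv (hτ : τ ≠ 0) (κ μ ν ξ t : ℂ) :
    certificate τ l x κ μ ν ξ (t + 1 / τ) = certificate τ l x κ μ ν ξ t := by
  have hcosh (u v : ℂ) (hu : u = v + 1 / τ) : qcosh τ u = qcosh τ v := by
    rw [hu, qcosh, qcosh, qpow_neg, qpow_neg, qpow_add, one_div, qpow_inv_self hτ, mul_one]
  rw [certificate, hcosh (t + 1 / τ + x + 1 - l) (t + x + 1 - l) (by ring),
    hcosh (t + 1 / τ - l) (t - l) (by ring), hcosh (t + 1 / τ + x + l) (t + x + l) (by ring),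
    hcosh (t + 1 / τ + 1 + l) (t + 1 + l) (by ring), certificate]

lemma phiPrimitive_periodic (hτ : τ ≠ 0) {k m : ℤ} (hα : α = 2 * k) (hβ : β = 2 * m) :
    Function.Periodic (phiPrimitive τ l α ρ β σ x) (1 / τ) := by
  intro s
  have hlower := lowerKernel_periodic (h := -(2 * τ)⁻¹) (l := -l) (p := β + σ) (r := σ) (k := -m)
    hτ (by rw [hβ]; push_cast; ring) (x + s)
  have hupper := upperKernel_periodic (h := (2 * τ)⁻¹) (l := l) (p := ρ) (r := α + ρ) (k := k)
    hτ (by rw [hα]; ring) s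
  rw [phiPrimitive, ← add_assoc, hlower, hupper, add_sub_right_comm, certificate_add_inv hτ,
    phiPrimitive]

lemma integral_phiPrimitive_add_two_sub (hτ : 0 < τ.im) {k m : ℤ} (hα : α = 2 * k)
    (hβ : β = 2 * m) (hβσ : 0 < (τ * (β + σ - l + x - 1)).im)
    (hσ : 0 < (τ * (σ - l - x - 2)).im) (hρ : 0 < (τ * (ρ + l + 1)).im)
    (hαρ : 0 < (τ * (α + ρ + l)).im) :
    ∫ y in (0 : ℝ)..1,
      (phiPrimitive τ l α ρ β σ x (y / τ + 2) - phiPrimitive τ l α ρ β σ x (y / τ)) = 0 := by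
  have hτ₀ := ne_zero_of_im_pos hτ
  have hshift (y : ℝ) : (y : ℂ) / τ + 2 = (y + 2 * τ) / τ := by field_simp
  simp only [hshift]
  refine integral_sub_eq_zero_of_periodic (g := fun z => phiPrimitive τ l α ρ β σ x (z / τ))
    (im_two_mul_pos hτ).le (fun z => ?_) fun z hz₀ hz₂ => ?_
  · beta_reduce
    rw [add_div, phiPrimitive_periodic hτ₀ hα hβ]
  have hz : 0 ≤ (τ * (z / τ)).im := by rwa [mul_div_cancel₀ _ hτ₀]
  have hz' : 0 ≤ (τ * (2 - z / τ)).im := by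
    rwa [mul_sub, mul_div_cancel₀ _ hτ₀, mul_comm, sub_im, sub_nonneg]
  exact DifferentiableAt.comp z (differentiableAt_phiPrimitive hτ
    (im_mul_pos_of_eq_add hβσ hz (by ring)) (im_mul_pos_of_eq_add hσ hz' (by ring))
    (im_mul_pos_of_eq_add hρ hz (by ring)) (im_mul_pos_of_eq_add hαρ hz' (by ring)))
    (by fun_prop)

theorem phiMat_difference_equation {lam : ℂ} (hτ : 0 < τ.im) {k m : ℤ} (hα : α = 2 * k)
    (hβ : β = 2 * m) (hβσ : 0 < (τ * (β + σ - I * lam + x - 1)).im)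
    (hσ : 0 < (τ * (σ - I * lam - x - 2)).im) (hρ : 0 < (τ * (ρ + I * lam + 1)).im)
    (hαρ : 0 < (τ * (α + ρ + I * lam)).im) :
    qsinh τ (x - 1) * frickeForm (qcosh τ σ) (qcosh τ ρ) (qcosh τ (x + 1)) *
          phiMat τ lam α ρ β σ (x + 2) +
        qsinh τ (x + 1) * frickeForm (qcosh τ (β + σ)) (qcosh τ (α + ρ)) (qcosh τ (x - 1)) *
          phiMat τ lam α ρ β σ (x - 2) =
      centralCoeff τ (I * lam) x (qcosh τ σ) (qcosh τ (β + σ)) (qcosh τ ρ) (qcosh τ (α + ρ)) *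
        phiMat τ lam α ρ β σ x := by
  have hτ₀ := ne_zero_of_im_pos hτ
  have htwo := im_mul_two_nonneg hτ
  have hβσ₁ : 0 < (τ * (β + σ - I * lam + x + 1)).im := im_mul_pos_of_eq_add hβσ htwo (by ring)
  have hσ₀ : 0 < (τ * (σ - I * lam - x)).im := im_mul_pos_of_eq_add hσ htwo (by ring)
  have hmid := intervalIntegrable_phiIntegrand hτ hβσ₁ hσ₀ hρ hαρ
  have hadd := intervalIntegrable_phiIntegrand (x := x + 2) (β := β) (σ := σ) hτ
    (im_mul_pos_of_eq_add hβσ₁ htwo (by ring)) (by convert hσ using 3; ring) hρ hαρ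
  have hsub := intervalIntegrable_phiIntegrand (x := x - 2) (β := β) (σ := σ) hτ
    (by convert hβσ using 3; ring) (im_mul_pos_of_eq_add hσ₀ htwo (by ring)) hρ hαρ
  rw [← sub_eq_zero, ← integral_phiPrimitive_add_two_sub hτ hα hβ hβσ hσ hρ hαρ]
  simp only [phiMat_eq_integral, ← intervalIntegral.integral_const_mul]
  rw [← intervalIntegral.integral_add (hadd.const_mul _) (hsub.const_mul _),
    ← intervalIntegral.integral_sub ((hadd.const_mul _).add (hsub.const_mul _))
      (hmid.const_mul _)]
  refine intervalIntegral.integral_congr fun y _ => ?_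
  have hy : (τ * (y / τ)).im = 0 := by rw [mul_div_cancel₀ _ hτ₀, ofReal_im]
  have hy' : 0 ≤ (τ * -(y / τ)).im := by rw [mul_neg, neg_im, hy, neg_zero]
  exact phiIntegrand_difference_eq hτ (im_mul_pos_of_eq_add hβσ hy.ge (by ring))
    (im_mul_pos_of_eq_add hσ hy' (by ring)) (im_mul_pos_of_eq_add hρ hy.ge (by ring))
    (im_mul_pos_of_eq_add hαρ hy' (by ring))

end DifferenceEquation

section Gauge

variable {τ a b c d x : ℂ}

lemma qcosh_half_mul_qcosh_half {h : ℂ} (hh : qpow τ h = -1) (u v : ℂ) :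
    qcosh τ ((h + u) / 2) * qcosh τ ((h + v) / 2) =
      qcosh τ ((u - v) / 2) - qcosh τ ((u + v) / 2) := by
  rw [qcosh_mul_qcosh, show (h + u) / 2 + (h + v) / 2 = h + (u + v) / 2 by ring,
    qcosh_add_of_qpow_eq_neg_one hh, show (h + u) / 2 - (h + v) / 2 = (u - v) / 2 by ring]
  ring

lemma inv_qGamma_two_mul_sub_one (hτ : 0 < τ.im) (u : ℂ) :
    (qGamma (2 * τ) (u - 1))⁻¹ = qcosh τ (u / 2) * (qGamma (2 * τ) (u + 1))⁻¹ := by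
  rw [inv_qGamma_sub_one (im_two_mul_pos hτ), qcosh_two_mul_left]
  ring_nf

lemma qGamma_two_mul_add_one (hτ : 0 < τ.im) {u : ℂ} (hu : qGamma (2 * τ) (u - 1) ≠ 0) :
    qGamma (2 * τ) (u + 1) = qcosh τ (u / 2) * qGamma (2 * τ) (u - 1) := by
  rw [qGamma_add_one (im_two_mul_pos hτ) hu, qcosh_two_mul_left]
  ring_nf

lemma mul_inv_gaugeDelta_add_two (hτ : 0 < τ.im) (hΔ : gaugeDelta τ a b c d (x + 2) ≠ 0) :
    (qcosh τ (x + (c + d) / 2) - qcosh τ ((c - d) / 2)) * (gaugeDelta τ a b c d (x + 2))⁻¹ =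
      (qcosh τ (x + 2 - (a + b) / 2) - qcosh τ ((a - b) / 2)) * (gaugeDelta τ a b c d x)⁻¹ := by
  have hh := qpow_inv_two_mul_self (ne_zero_of_im_pos hτ)
  set h := (2 * τ)⁻¹ with hdef
  have hden := (div_ne_zero_iff.mp hΔ).2
  rw [← hdef] at hden
  have hnum (w : ℂ) : (qGamma (2 * τ) (-1 + h + w - (x + 2)))⁻¹ =
      qcosh τ ((h + (w - x - 2)) / 2) * (qGamma (2 * τ) (-1 + h + w - x))⁻¹ := by
    convert inv_qGamma_two_mul_sub_one hτ (h + (w - x - 2)) using 3 <;> ring_nf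
  have hshift (w : ℂ) (hw : qGamma (2 * τ) (1 + h - w - (x + 2)) ≠ 0) :
      qGamma (2 * τ) (1 + h - w - x) =
        qcosh τ ((h + (-w - x)) / 2) * qGamma (2 * τ) (1 + h - w - (x + 2)) := by
    have hsub : 1 + h - w - (x + 2) = h + (-w - x) - 1 := by ring
    rw [hsub] at hw ⊢
    rw [← qGamma_two_mul_add_one hτ hw]
    ring_nf
  have hab := qcosh_half_mul_qcosh_half hh (a - x - 2) (b - x - 2)
  have hcd := qcosh_half_mul_qcosh_half hh (-c - x) (-d - x)
  rw [show (a - x - 2 - (b - x - 2)) / 2 = (a - b) / 2 by ring,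
    show (a - x - 2 + (b - x - 2)) / 2 = -(x + 2 - (a + b) / 2) by ring, qcosh_neg] at hab
  rw [show (-c - x - (-d - x)) / 2 = -((c - d) / 2) by ring,
    show (-c - x + (-d - x)) / 2 = -(x + (c + d) / 2) by ring, qcosh_neg, qcosh_neg] at hcd
  rw [← neg_sub, ← hcd, ← neg_sub (qcosh τ ((a - b) / 2)), ← hab]
  simp only [gaugeDelta, ← hdef, div_eq_mul_inv, mul_inv, inv_inv, hnum,
    hshift c (left_ne_zero_of_mul hden), hshift d (right_ne_zero_of_mul hden)]
  ring

end Gauge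

section AskeyWilson

variable {τ a b c d x : ℂ}

lemma awA_eq_qcosh (τ a b c d x : ℂ) :
    awA τ a b c d x = qpow τ ((a + b + c + d) / 2 - 1) *
      ((qcosh τ (x + (a + b) / 2) - qcosh τ ((a - b) / 2)) *
        (qcosh τ (x + (c + d) / 2) - qcosh τ ((c - d) / 2))) /
      (qsinh τ x * qsinh τ (x + 1)) := by
  have hpair (u v : ℂ) : (1 - qpow τ (u + x)) * (1 - qpow τ (v + x)) =
      qpow τ (x + (u + v) / 2) * (qcosh τ (x + (u + v) / 2) - qcosh τ ((u - v) / 2)) := by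
    rw [← one_sub_qpow_add_mul_one_sub_qpow_sub]
    ring_nf
  have hexp : qpow τ (x + (a + b) / 2) * qpow τ (x + (c + d) / 2) =
      qpow τ ((a + b + c + d) / 2 - 1) * (qpow τ x * qpow τ (x + 1)) := by
    rw [← qpow_add, ← qpow_add, ← qpow_add]
    ring_nf
  have hx := qpow_ne_zero τ x
  have hx₁ := qpow_ne_zero τ (x + 1)
  rw [awA, mul_assoc _ (1 - qpow τ (c + x)), hpair, hpair, one_sub_qpow,
    show 2 + 2 * x = 2 * (x + 1) by ring, one_sub_qpow, mul_mul_mul_comm, hexp, neg_mul_neg,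
    mul_mul_mul_comm (qpow τ x), mul_comm (qpow τ ((a + b + c + d) / 2 - 1)), mul_assoc,
    mul_div_mul_left _ _ (mul_ne_zero hx hx₁)]

lemma awA_mul_inv_gaugeDelta_add_two (hτ : 0 < τ.im)
    (hΔ : gaugeDelta τ a b c d (x + 2) ≠ 0) :
    awA τ a b c d x * (gaugeDelta τ a b c d (x + 2))⁻¹ = qpow τ ((a + b + c + d) / 2 - 1) *
      frickeForm (qcosh τ ((a + b) / 2 - 1)) (qcosh τ ((a - b) / 2)) (qcosh τ (x + 1)) /
      (qsinh τ x * qsinh τ (x + 1)) * (gaugeDelta τ a b c d x)⁻¹ := by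
  rw [awA_eq_qcosh, frickeForm_qcosh, show x + 1 + ((a + b) / 2 - 1) = x + (a + b) / 2 by ring,
    show x + 1 - ((a + b) / 2 - 1) = x + 2 - (a + b) / 2 by ring]
  linear_combination qpow τ ((a + b + c + d) / 2 - 1) *
    (qcosh τ (x + (a + b) / 2) - qcosh τ ((a - b) / 2)) / (qsinh τ x * qsinh τ (x + 1)) *
      mul_inv_gaugeDelta_add_two hτ hΔ

lemma awA_neg_eq_qcosh (τ a b c d x : ℂ) :
    awA τ a b c d (-x) = qpow τ ((a + b + c + d) / 2 - 1) *
      ((qcosh τ (x - (a + b) / 2) - qcosh τ ((a - b) / 2)) *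
        (qcosh τ (x - (c + d) / 2) - qcosh τ ((c - d) / 2))) /
      (qsinh τ x * qsinh τ (x - 1)) := by
  have hcosh (u : ℂ) : qcosh τ (-x + u) = qcosh τ (x - u) := by rw [← qcosh_neg, neg_add', neg_neg]
  have hsinh : qsinh τ (-x + 1) = -qsinh τ (x - 1) := by rw [← qsinh_neg, neg_sub', sub_neg_eq_add]
  rw [awA_eq_qcosh, hcosh, hcosh, hsinh, qsinh_neg, neg_mul_neg]

lemma awA_neg_mul_inv_gaugeDelta_sub_two (hτ : 0 < τ.im) (hΔ : gaugeDelta τ a b c d x ≠ 0) :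
    awA τ a b c d (-x) * (gaugeDelta τ a b c d (x - 2))⁻¹ = qpow τ ((a + b + c + d) / 2 - 1) *
      frickeForm (qcosh τ (1 - (c + d) / 2)) (qcosh τ ((c - d) / 2)) (qcosh τ (x - 1)) /
      (qsinh τ x * qsinh τ (x - 1)) * (gaugeDelta τ a b c d x)⁻¹ := by
  have hgauge := mul_inv_gaugeDelta_add_two (x := x - 2) hτ (by rwa [sub_add_cancel])
  rw [sub_add_cancel] at hgauge
  rw [awA_neg_eq_qcosh, frickeForm_qcosh, show x - 1 + (1 - (c + d) / 2) = x - (c + d) / 2 by ring,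
    show x - 1 - (1 - (c + d) / 2) = x - 2 + (c + d) / 2 by ring]
  linear_combination -qpow τ ((a + b + c + d) / 2 - 1) *
    (qcosh τ (x - (c + d) / 2) - qcosh τ ((c - d) / 2)) / (qsinh τ x * qsinh τ (x - 1)) * hgauge

lemma eigenE_eq_qcosh (τ lam β : ℂ) :
    eigenE τ lam β = qpow τ (1 - β) * (qcosh τ (2 * (I * lam)) - qcosh τ (1 - β)) := by
  have h := qpow_ne_zero τ (1 - β)
  rw [eigenE, qcosh, qcosh, qpow_neg τ (1 - β), show 2 - 2 * β = 2 * (1 - β) by ring,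
    qpow_two_mul, ← mul_assoc]
  field_simp
  ring

lemma qsinh_ne_zero {u : ℂ} (hu : qpow τ (2 * u) ≠ 1) : qsinh τ u ≠ 0 := by
  intro h
  have hone := one_sub_qpow τ u
  rw [h, mul_zero, neg_zero, sub_eq_zero] at hone
  exact hu hone.symm

lemma qsinh_add_one_ne_zero (hx : qpow τ (2 * x) ≠ qpow τ (-2)) : qsinh τ (x + 1) ≠ 0 := by
  refine qsinh_ne_zero fun h => hx ?_
  rwa [mul_add, mul_one, qpow_add, mul_eq_one_iff_eq_inv₀ (qpow_ne_zero _ _), ← qpow_neg] at h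

lemma qsinh_sub_one_ne_zero (hx : qpow τ (2 * x) ≠ qpow τ 2) : qsinh τ (x - 1) ≠ 0 := by
  refine qsinh_ne_zero fun h => hx ?_
  rwa [mul_sub, mul_one, qpow_sub, div_eq_one_iff_eq (qpow_ne_zero _ _)] at h

lemma awA_add_awA_neg_add_eigenE (hx : qsinh τ x ≠ 0) (hadd : qsinh τ (x + 1) ≠ 0)
    (hsub : qsinh τ (x - 1) ≠ 0) {lam α ρ β σ : ℂ}
    (ha : a = 1 + ρ + σ) (hb : b = 1 - ρ + σ) (hc : c = 1 + α + ρ - β - σ)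
    (hd : d = 1 - α - ρ - β - σ) :
    awA τ a b c d x + awA τ a b c d (-x) + eigenE τ lam β =
      qpow τ (1 - β) * centralCoeff τ (I * lam) x (qcosh τ σ) (qcosh τ (β + σ)) (qcosh τ ρ)
        (qcosh τ (α + ρ)) / (qsinh τ x * qsinh τ (x + 1) * qsinh τ (x - 1)) := by
  rw [awA_eq_qcosh, awA_neg_eq_qcosh, eigenE_eq_qcosh, ← sum_coeff_eq_centralCoeff,
    show (a + b + c + d) / 2 - 1 = 1 - β by rw [ha, hb, hc, hd]; ring,
    show (a + b) / 2 = 1 + σ by rw [ha, hb]; ring, show (a - b) / 2 = ρ by rw [ha, hb]; ring,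
    show (c + d) / 2 = 1 - β - σ by rw [hc, hd]; ring,
    show (c - d) / 2 = α + ρ by rw [hc, hd]; ring,
    show x + (1 + σ) = x + 1 + σ by ring, show x - (1 + σ) = x - 1 - σ by ring,
    show x + (1 - β - σ) = x + 1 - β - σ by ring, show x - (1 - β - σ) = x - 1 + β + σ by ring]
  field_simp

end AskeyWilson

theorem gauged_phiMat_AskeyWilson_general {τ lam α ρ β σ a b c d x : ℂ} (hτ : 0 < τ.im)
    {m n : ℤ} (hα : α = 2 * m) (hβ : β = 2 * n)
    (ha : a = 1 + ρ + σ) (hb : b = 1 - ρ + σ)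
    (hc : c = 1 + α + ρ - β - σ) (hd : d = 1 - α - ρ - β - σ)
    (hβσ : 0 < (τ * (β + σ - I * lam + x - 1)).im) (hσ : 0 < (τ * (σ - I * lam - x - 2)).im)
    (hρ : 0 < (τ * (ρ + I * lam + 1)).im) (hαρ : 0 < (τ * (α + ρ + I * lam)).im)
    {F : ℂ → ℂ} (hF : ∀ z, F z = (gaugeDelta τ a b c d z)⁻¹ * phiMat τ lam α ρ β σ z)
    (hx : qpow τ (2 * x) ≠ 1) (hx_two : qpow τ (2 * x) ≠ qpow τ 2)
    (hx_neg_two : qpow τ (2 * x) ≠ qpow τ (-2))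
    (hΔ : gaugeDelta τ a b c d x ≠ 0) (hΔ_add_two : gaugeDelta τ a b c d (x + 2) ≠ 0) :
    awA τ a b c d x * (F (x + 2) - F x) + awA τ a b c d (-x) * (F (x - 2) - F x) =
      eigenE τ lam β * F x := by
  have hs := qsinh_ne_zero hx
  have hs_add : qsinh τ (x + 1) ≠ 0 := qsinh_add_one_ne_zero hx_neg_two
  have hs_sub : qsinh τ (x - 1) ≠ 0 := qsinh_sub_one_ne_zero hx_two
  have hadd := awA_mul_inv_gaugeDelta_add_two hτ hΔ_add_two
  have hsub := awA_neg_mul_inv_gaugeDelta_sub_two hτ hΔ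
  rw [show (a + b + c + d) / 2 - 1 = 1 - β by rw [ha, hb, hc, hd]; ring] at hadd hsub
  rw [show (a + b) / 2 - 1 = σ by rw [ha, hb]; ring,
    show (a - b) / 2 = ρ by rw [ha, hb]; ring] at hadd
  rw [show 1 - (c + d) / 2 = β + σ by rw [hc, hd]; ring,
    show (c - d) / 2 = α + ρ by rw [hc, hd]; ring] at hsub
  have hphi := phiMat_difference_equation hτ hα hβ hβσ hσ hρ hαρ
  have hsum := awA_add_awA_neg_add_eigenE (lam := lam) hs hs_add hs_sub ha hb hc hd
  suffices awA τ a b c d x * F (x + 2) + awA τ a b c d (-x) * F (x - 2) =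
      (awA τ a b c d x + awA τ a b c d (-x) + eigenE τ lam β) * F x by
    linear_combination this
  simp only [hF, hsum, ← mul_assoc, hadd, hsub]
  field_simp
  linear_combination qpow τ (1 - β) * hphi

/-- The gauged matrix coefficient `F_λ(x) = Δ(x)⁻¹·φ_λ(x)` satisfies the Askey-Wilson
second order difference equation `A(x)(F(x+2)−F(x)) + A(−x)(F(x−2)−F(x)) = E(λ;β)F(x)`
for generic `x ∈ iℝ` at which `Δ` is defined and nonzero at `x`, `x±2`. -/
theorem gauged_phiMat_AskeyWilson (t : ℝ) (ht : 0 < t) (τ : ℂ)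
    (hτ : τ = Complex.I * (t : ℂ)) (lam : ℝ) (m n : ℤ) (hm : 0 < m) (hn : 0 < n)
    (α β : ℂ) (hα : α = 2 * (m : ℂ)) (hβ : β = 2 * (n : ℂ))
    (ρ σ : ℝ) (hρ : 3 ≤ ρ) (hσ : 3 ≤ σ) (a b c d : ℂ)
    (ha : a = 1 + (ρ : ℂ) + (σ : ℂ)) (hb : b = 1 - (ρ : ℂ) + (σ : ℂ))
    (hc : c = 1 + α + (ρ : ℂ) - β - (σ : ℂ)) (hd : d = 1 - α - (ρ : ℂ) - β - (σ : ℂ))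
    (F : ℂ → ℂ)
    (hF : ∀ x : ℂ, F x = (gaugeDelta τ a b c d x)⁻¹ * phiMat τ (lam : ℂ) α (ρ : ℂ) β (σ : ℂ) x) :
    ∀ x : ℂ, x.re = 0 →
      qpow τ (2 * x) ≠ 1 → qpow τ (2 * x) ≠ qpow τ 2 → qpow τ (2 * x) ≠ qpow τ (-2) →
      gaugeDeltaDefined τ a b c d x → gaugeDeltaDefined τ a b c d (x + 2) →
      gaugeDeltaDefined τ a b c d (x - 2) →
      gaugeDelta τ a b c d x ≠ 0 → gaugeDelta τ a b c d (x + 2) ≠ 0 →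
      gaugeDelta τ a b c d (x - 2) ≠ 0 →
      awA τ a b c d x * (F (x + 2) - F x) + awA τ a b c d (-x) * (F (x - 2) - F x) =
        eigenE τ (lam : ℂ) β * F x := by
  intro x hx hx_one hx_two hx_neg_two _ _ _ hΔ hΔ_add_two _
  have him_pos {w : ℂ} {r : ℝ} (hw : w.re = r) (hr : 0 < r) : 0 < (τ * w).im := by
    rw [hτ, mul_assoc, I_mul_im, re_ofReal_mul, hw]
    exact mul_pos ht hr
  have hm_pos : (0 : ℝ) < m := by exact_mod_cast hm
  have hn_pos : (0 : ℝ) < n := by exact_mod_cast hn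
  exact gauged_phiMat_AskeyWilson_general (by simpa [hτ] using ht) hα hβ ha hb hc hd
    (him_pos (r := 2 * n + σ - 1) (by simp [hβ, hx]) (by linarith))
    (him_pos (r := σ - 2) (by simp [hx]) (by linarith))
    (him_pos (r := ρ + 1) (by simp) (by linarith))
    (him_pos (r := 2 * m + ρ) (by simp [hα]) (by linarith))
    hF hx_one hx_two hx_neg_two hΔ hΔ_add_two
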